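/- Under the ELS setup, suppose 0 < b < 1, b ≤ α_i, β_j ≤ 1/b for all i, j ∈ [n], and the initialization satisfies b ≤ x_{i→j,0} ≤ 1/b and b ≤ y_{j→i,0} ≤ 1/b for every edge (i,j) of G. Then for all t ≥ 0 and all edges: b² ≤ x_{i→j,t}/α_i ≤ 1/b², b² ≤ y_{j→i,t}/β_j ≤ 1/b², and consequently b³ ≤ x_{i→j,t} ≤ 1/b³ and b³ ≤ y_{j→i,t} ≤ 1/b³. -/

import Mathlib

/-!
Put `c = b²`. The proof propagates the invariant `c * β j ≤ y_{j→i}` and `c * y_{j→i} ≤ β j` (and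
its analogue for `x`, `α`), which says that the ratio `u = y_{j→i} / β j` lies in `[c, 1/c]`.
The updated ratio `x_{i→j} / α i = (∑ β² u) / (∑ β² u²)` is a weighted average of the numbers
`1 / u`, so it again lies in `[c, 1/c]`, an interval invariant under `u ↦ 1/u`; this is
`ratio_step`. The sums are over nonempty sets because all degrees are at least two. At time zero
the invariant follows from `b² * (1/b) = b`. The bounds by `b³` come from multiplying the ratio
bounds by `α i` or `β j`, which lie in `[b, 1/b]`.
-/

/-- One least-squares update preserves the interval `[c, 1/c]` of ratios `w k / v k`. -/
theorem ratio_step {ι : Type*} (s : Finset ι) (hs : s.Nonempty) (a c : ℝ) (ha : 0 < a)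
    (hc : 0 < c) (v w : ι → ℝ) (hv : ∀ k ∈ s, 0 < v k)
    (hw : ∀ k ∈ s, c * v k ≤ w k ∧ c * w k ≤ v k) :
    c * a ≤ (∑ k ∈ s, (a * v k) * w k) / (∑ k ∈ s, w k ^ 2) ∧
      c * ((∑ k ∈ s, (a * v k) * w k) / (∑ k ∈ s, w k ^ 2)) ≤ a := by
  have hwpos : ∀ k ∈ s, 0 < w k := fun k hk =>
    lt_of_lt_of_le (mul_pos hc (hv k hk)) (hw k hk).1
  have hD : 0 < ∑ k ∈ s, w k ^ 2 := Finset.sum_pos (fun k hk => pow_pos (hwpos k hk) 2) hs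
  constructor
  · rw [le_div_iff₀ hD, Finset.mul_sum]
    refine Finset.sum_le_sum fun k hk => ?_
    have := mul_le_mul_of_nonneg_left (hw k hk).2 (mul_pos ha (hwpos k hk)).le
    linarith
  · rw [← mul_div_assoc, div_le_iff₀ hD, Finset.mul_sum, Finset.mul_sum]
    refine Finset.sum_le_sum fun k hk => ?_
    have := mul_le_mul_of_nonneg_left (hw k hk).1 (mul_pos ha (hwpos k hk)).le
    linarith

/-- Applied in both directions, this puts the ratio of two numbers of `[b, 1/b]` into
`[b², 1/b²]`. -/
theorem ratio_init {b u v : ℝ} (hb : 0 < b) (hu : u ≤ 1 / b) (hv : b ≤ v) :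
    b ^ 2 * u ≤ v := by
  rw [le_div_iff₀ hb] at hu
  nlinarith

theorem ratio_final {b a z : ℝ} (hb : 0 < b) (ha : b ≤ a ∧ a ≤ 1 / b)
    (hz : b ^ 2 * a ≤ z ∧ b ^ 2 * z ≤ a) :
    (b ^ 2 ≤ z / a ∧ z / a ≤ 1 / b ^ 2) ∧ (b ^ 3 ≤ z ∧ z ≤ 1 / b ^ 3) := by
  have ha0 : 0 < a := hb.trans_le ha.1
  have hb2 : 0 < b ^ 2 := pow_pos hb 2
  obtain ⟨h1, h2⟩ := ha
  rw [le_div_iff₀ hb] at h2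
  refine ⟨⟨(le_div_iff₀ ha0).2 hz.1, ?_⟩, ?_, ?_⟩
  · rw [div_le_div_iff₀ ha0 hb2]
    linarith [hz.2]
  · have := mul_le_mul_of_nonneg_left h1 hb2.le
    linarith [hz.1, pow_succ b 2]
  · rw [le_div_iff₀ (pow_pos hb 3)]
    have := mul_le_mul_of_nonneg_left hz.2 hb.le
    linarith [pow_succ b 2, show z * b ^ 3 = b * (b ^ 2 * z) by ring]

/-- Under the ELS setup, if `b ≤ α, β ≤ 1/b` and the initialization satisfies
`b ≤ x_{i→j,0}, y_{j→i,0} ≤ 1/b` on every edge, then for all times `t` and all edges the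
ratios `x_{i→j,t}/α i` and `y_{j→i,t}/β j` lie in `[b², 1/b²]`, and consequently
`x_{i→j,t}, y_{j→i,t} ∈ [b³, 1/b³]`. Here `x t i j = x_{i→j,t}` and `y t j i = y_{j→i,t}`. -/
theorem stmt_11 (n : ℕ) (hn : 1 ≤ n) (Adj : Fin n → Fin n → Prop) [DecidableRel Adj]
    (hrowdeg : ∀ i : Fin n, 2 ≤ (Finset.univ.filter fun j => Adj i j).card)
    (hcoldeg : ∀ j : Fin n, 2 ≤ (Finset.univ.filter fun i => Adj i j).card)
    (b : ℝ) (hb0 : 0 < b) (hb1 : b < 1)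
    (α β : Fin n → ℝ)
    (hαb : ∀ i, b ≤ α i ∧ α i ≤ 1 / b) (hβb : ∀ j, b ≤ β j ∧ β j ≤ 1 / b)
    (x y : ℕ → Fin n → Fin n → ℝ)
    (hx0 : ∀ i j : Fin n, Adj i j → b ≤ x 0 i j ∧ x 0 i j ≤ 1 / b)
    (hy0 : ∀ i j : Fin n, Adj i j → b ≤ y 0 j i ∧ y 0 j i ≤ 1 / b)
    (hxrec : ∀ t : ℕ, ∀ i j : Fin n, Adj i j →
      x (t + 1) i j =
        (∑ k ∈ (Finset.univ.filter fun k => Adj i k).erase j, (α i * β k) * y t k i) /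
          (∑ k ∈ (Finset.univ.filter fun k => Adj i k).erase j, (y t k i) ^ 2))
    (hyrec : ∀ t : ℕ, ∀ i j : Fin n, Adj i j →
      y (t + 1) j i =
        (∑ k ∈ (Finset.univ.filter fun k => Adj k j).erase i, (α k * β j) * x (t + 1) k j) /
          (∑ k ∈ (Finset.univ.filter fun k => Adj k j).erase i, (x (t + 1) k j) ^ 2)) :
    (∀ t : ℕ, ∀ i j : Fin n, Adj i j →
      b ^ 2 ≤ x t i j / α i ∧ x t i j / α i ≤ 1 / b ^ 2) ∧
    (∀ t : ℕ, ∀ i j : Fin n, Adj i j →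
      b ^ 2 ≤ y t j i / β j ∧ y t j i / β j ≤ 1 / b ^ 2) ∧
    (∀ t : ℕ, ∀ i j : Fin n, Adj i j → b ^ 3 ≤ x t i j ∧ x t i j ≤ 1 / b ^ 3) ∧
    (∀ t : ℕ, ∀ i j : Fin n, Adj i j → b ^ 3 ≤ y t j i ∧ y t j i ≤ 1 / b ^ 3) := by
  have hα0 : ∀ i, 0 < α i := fun i => hb0.trans_le (hαb i).1
  have hβ0 : ∀ j, 0 < β j := fun j => hb0.trans_le (hβb j).1
  have hb2 : 0 < b ^ 2 := pow_pos hb0 2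
  -- A set with at least two elements stays nonempty after removal of one element.
  have hne : ∀ (s : Finset (Fin n)) (k : Fin n), 2 ≤ s.card → (s.erase k).Nonempty := by
    intro s k hs
    rw [← Finset.card_pos]
    have := Finset.pred_card_le_card_erase (s := s) (a := k)
    omega
  have hxstep : ∀ t, (∀ i j, Adj i j → b ^ 2 * β j ≤ y t j i ∧ b ^ 2 * y t j i ≤ β j) →
      ∀ i j, Adj i j → b ^ 2 * α i ≤ x (t + 1) i j ∧ b ^ 2 * x (t + 1) i j ≤ α i := by
    intro t hy i j hij
    rw [hxrec t i j hij]
    refine ratio_step _ (hne _ j (hrowdeg i)) (α i) (b ^ 2) (hα0 i) hb2 β (fun k => y t k i)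
      (fun k _ => hβ0 k) fun k hk => hy i k ?_
    exact (Finset.mem_filter.1 (Finset.mem_of_mem_erase hk)).2
  have hystep : ∀ t, (∀ i j, Adj i j →
        b ^ 2 * α i ≤ x (t + 1) i j ∧ b ^ 2 * x (t + 1) i j ≤ α i) →
      ∀ i j, Adj i j → b ^ 2 * β j ≤ y (t + 1) j i ∧ b ^ 2 * y (t + 1) j i ≤ β j := by
    intro t hx i j hij
    rw [hyrec t i j hij]
    simp only [mul_comm (α _) (β j)]
    refine ratio_step _ (hne _ i (hcoldeg j)) (β j) (b ^ 2) (hβ0 j) hb2 α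
      (fun k => x (t + 1) k j) (fun k _ => hα0 k) fun k hk => hx k j ?_
    exact (Finset.mem_filter.1 (Finset.mem_of_mem_erase hk)).2
  have hY : ∀ t i j, Adj i j → b ^ 2 * β j ≤ y t j i ∧ b ^ 2 * y t j i ≤ β j := by
    intro t
    induction t with
    | zero =>
      intro i j hij
      exact ⟨ratio_init hb0 (hβb j).2 (hy0 i j hij).1, ratio_init hb0 (hy0 i j hij).2 (hβb j).1⟩
    | succ t ih => exact hystep t (hxstep t ih)
  have hX : ∀ t i j, Adj i j → b ^ 2 * α i ≤ x t i j ∧ b ^ 2 * x t i j ≤ α i := by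
    intro t
    cases t with
    | zero =>
      intro i j hij
      exact ⟨ratio_init hb0 (hαb i).2 (hx0 i j hij).1, ratio_init hb0 (hx0 i j hij).2 (hαb i).1⟩
    | succ t => exact hxstep t (hY t)
  exact ⟨fun t i j h => (ratio_final hb0 (hαb i) (hX t i j h)).1,
    fun t i j h => (ratio_final hb0 (hβb j) (hY t i j h)).1,
    fun t i j h => (ratio_final hb0 (hαb i) (hX t i j h)).2,
    fun t i j h => (ratio_final hb0 (hβb j) (hY t i j h)).2⟩
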